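/- arXiv:1408.4312 — 2 statements merged into one kernel-verified Lean document; each statement's English description precedes it below -/
import Mathlib

section
/- Let G be a group and let u ⊆ G be a minimal generating set. If a, b ∈ u with a ≠ b, then the product ab does not belong to u ∪ u⁻¹ ∪ {1}. (This is the key combinatorial step in the proof that for a minimal generating set, S(u) fails to be a subalgebra of the group algebra when |u| > 1.) -/
/-- An element of a minimal generating set is not generated by the others. -/
theorem notMem_closure_diff_singleton_of_minimal {G : Type*} [Group G] {u : Set G}
    (hgen : Subgroup.closure u = ⊤)
    (hmin : ∀ v : Set G, v ⊂ u → Subgroup.closure v ≠ ⊤) {x : G} (hx : x ∈ u) :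
    x ∉ Subgroup.closure (u \ {x}) := by
  intro hmem
  refine hmin (u \ {x}) (Set.sdiff_singleton_ssubset.2 hx) (top_le_iff.1 ?_)
  rw [← hgen, Subgroup.closure_le]
  intro y hy
  by_cases hyx : y = x
  · exact hyx ▸ hmem
  · exact Subgroup.subset_closure ⟨hy, hyx⟩

/-- If `u` is a minimal generating set of a group `G` and `a, b ∈ u` are distinct,
then `a * b ∉ u ∪ u⁻¹ ∪ {1}`. -/
theorem product_not_in_union_of_minimal_generating_set
    {G : Type*} [Group G] (u : Set G)
    (hgen : Subgroup.closure u = ⊤)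
    (hmin : ∀ v : Set G, v ⊂ u → Subgroup.closure v ≠ ⊤)
    {a b : G} (ha : a ∈ u) (hb : b ∈ u) (hab : a ≠ b) :
    a * b ∉ u ∪ u⁻¹ ∪ {1} := by
  have hna : a * b ∉ Subgroup.closure (u \ {a}) := fun h =>
    notMem_closure_diff_singleton_of_minimal hgen hmin ha
      ((Subgroup.mul_mem_cancel_right _ (Subgroup.subset_closure
        (Set.mem_sdiff_singleton.2 ⟨hb, hab.symm⟩))).1 h)
  have hnb : a * b ∉ Subgroup.closure (u \ {b}) := fun h =>
    notMem_closure_diff_singleton_of_minimal hgen hmin hb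
      ((Subgroup.mul_mem_cancel_left _ (Subgroup.subset_closure
        (Set.mem_sdiff_singleton.2 ⟨ha, hab⟩))).1 h)
  rintro ((h | h) | h)
  · by_cases hc : a * b = b
    · exact hna (Subgroup.subset_closure ⟨h, fun h' => hab (h'.symm.trans hc)⟩)
    · exact hnb (Subgroup.subset_closure ⟨h, hc⟩)
  · by_cases hc : (a * b)⁻¹ = b
    · exact hna (inv_mem_iff.1
        (Subgroup.subset_closure ⟨h, fun h' => hab (h'.symm.trans hc)⟩))
    · exact hnb (inv_mem_iff.1 (Subgroup.subset_closure ⟨h, hc⟩))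
  · exact hna (Set.mem_singleton_iff.1 h ▸ one_mem _)
end

section
/- Let G be a group and let u ⊆ G be a minimal generating set. Then u ∪ u⁻¹ ∪ {1} = G if and only if G is finite of order at most 3. (This is the group-theoretic core of Theorem 5.3(ii): for a minimal generating set u of a finitely generated discrete group G, the operator system S(u) is (min, max)-nuclear if and only if |G| ≤ 3.) -/
/-- A minimal generating set which, together with its inverses and `1`, exhausts the group has
at most one element. -/
theorem subsingleton_of_minimal_of_union_eq_univ {G : Type*} [Group G] {u : Set G}
    (hgen : Subgroup.closure u = ⊤)
    (hmin : ∀ v : Set G, v ⊂ u → Subgroup.closure v ≠ ⊤)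
    (hu : ∀ g : G, g ∈ u ∨ g⁻¹ ∈ u ∨ g = 1) : u.Subsingleton := by
  intro a ha b hb
  by_contra hab
  have key : ∀ x ∈ u, x ∉ Subgroup.closure (u \ {x}) :=
    fun x hx => notMem_closure_diff_singleton_of_minimal hgen hmin hx
  have hne_one : ∀ x ∈ u, x ≠ 1 := fun x hx h => key x hx (h ▸ one_mem _)
  have mem : ∀ x ∈ u, ∀ y, x ≠ y → x ∈ Subgroup.closure (u \ {y}) :=
    fun x hx y hxy => Subgroup.subset_closure ⟨hx, hxy⟩
  have hab' := mem a ha b hab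
  have hba' := mem b hb a (Ne.symm hab)
  rcases hu (a * b) with h | h | h
  · refine key _ h (mul_mem (mem a ha _ ?_) (mem b hb _ ?_))
    · simpa using hne_one b hb
    · simpa using hne_one a ha
  · by_cases hca : a = (a * b)⁻¹
    · have hb2 : b = a⁻¹ * a⁻¹ := by
        rw [eq_inv_iff_mul_eq_one] at hca
        rw [← mul_inv_rev, eq_inv_iff_mul_eq_one, mul_eq_one_comm, mul_assoc, hca]
      exact key b hb (hb2 ▸ mul_mem (inv_mem (hb2 ▸ hab')) (inv_mem (hb2 ▸ hab')))
    · by_cases hcb : b = (a * b)⁻¹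
      · have ha2 : a = b⁻¹ * b⁻¹ := by
          rw [eq_comm, inv_eq_iff_mul_eq_one] at hcb
          rw [← mul_inv_rev, eq_inv_iff_mul_eq_one, ← mul_assoc, hcb]
        exact key a ha (ha2 ▸ mul_mem (inv_mem (ha2 ▸ hba')) (inv_mem (ha2 ▸ hba')))
      · exact key _ h (inv_mem (mul_mem (mem a ha _ hca) (mem b hb _ hcb)))
  · exact key b hb ((inv_eq_of_mul_eq_one_right h) ▸
      inv_mem ((inv_eq_of_mul_eq_one_right h).symm ▸ hab'))

/-- In a group of order at most `3`, every element is `1`, `a` or `a⁻¹`, for any `a ≠ 1`. -/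
theorem eq_or_inv_eq_or_eq_one_of_card_le_three {G : Type*} [Group G] [Finite G]
    (hcard : Nat.card G ≤ 3) {a : G} (ha : a ≠ 1) (g : G) : g = a ∨ g⁻¹ = a ∨ g = 1 := by
  classical
  by_contra! h
  obtain ⟨hga, hgia, hg⟩ := h
  have hag : a * g ≠ 1 := fun h => hgia (inv_eq_of_mul_eq_one_left h)
  have hfour : ({1, a, g, a * g} : Finset G).card = 4 := by
    rw [Finset.card_insert_of_notMem (by simp [ha.symm, hg.symm, hag.symm]),
      Finset.card_insert_of_notMem (by simp [hga.symm, hg]),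
      Finset.card_insert_of_notMem (by simp [ha]), Finset.card_singleton]
  have := Fintype.ofFinite G
  have hle := Finset.card_le_univ ({1, a, g, a * g} : Finset G)
  rw [← Nat.card_eq_fintype_card] at hle
  omega

/-- If `u` is a minimal generating set of a group `G`, then `u ∪ u⁻¹ ∪ {1} = G`
if and only if `G` is finite of order at most `3`. -/
theorem union_eq_univ_iff_card_le_three
    {G : Type*} [Group G] (u : Set G)
    (hgen : Subgroup.closure u = ⊤)
    (hmin : ∀ v : Set G, v ⊂ u → Subgroup.closure v ≠ ⊤) :
    (u ∪ u⁻¹ ∪ {1} : Set G) = Set.univ ↔ (Finite G ∧ Nat.card G ≤ 3) := by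
  have hmem : (u ∪ u⁻¹ ∪ {1} : Set G) = Set.univ ↔ ∀ g : G, g ∈ u ∨ g⁻¹ ∈ u ∨ g = 1 := by
    simp only [Set.eq_univ_iff_forall, Set.mem_union, Set.mem_inv, Set.mem_singleton_iff, or_assoc]
  rw [hmem]
  constructor
  · intro hu
    have hsub := subsingleton_of_minimal_of_union_eq_univ hgen hmin hu
    obtain ⟨a, hua⟩ : ∃ a, u ⊆ {a} := by
      rcases hsub.eq_empty_or_singleton with h | ⟨a, h⟩
      · exact ⟨1, by simp [h]⟩
      · exact ⟨a, h.subset⟩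
    classical
    have huniv : (Set.univ : Set G) = (({a, a⁻¹, 1} : Finset G) : Set G) := by
      ext g
      rcases hu g with h | h | h
      · have := hua h
        simp_all
      · have : g⁻¹ = a := hua h
        simp [← this]
      · simp [h]
    refine ⟨Set.finite_univ_iff.1 (huniv ▸ Finset.finite_toSet _), ?_⟩
    rw [← Set.ncard_univ, huniv, Set.ncard_coe_finset]
    exact Finset.card_le_three
  · rintro ⟨hfin, hcard⟩ g
    by_cases h : ∃ a ∈ u, a ≠ 1
    · obtain ⟨a, hau, ha⟩ := h
      rcases eq_or_inv_eq_or_eq_one_of_card_le_three hcard ha g with h | h | h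
      · exact Or.inl (h ▸ hau)
      · exact Or.inr (Or.inl (h ▸ hau))
      · exact Or.inr (Or.inr h)
    · push Not at h
      have hbot : Subgroup.closure u = ⊥ := Subgroup.closure_eq_bot_iff.2 h
      have hg : g ∈ Subgroup.closure u := hgen ▸ Subgroup.mem_top g
      rw [hbot, Subgroup.mem_bot] at hg
      exact Or.inr (Or.inr hg)
end
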